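/- Let A be a finite nonempty set of n agents, v a real-valued characteristic function on the nonempty subsets of A, λ > 2·Σ_C |v(C)|, and f(x) = −Σ_C v(C)·x_C + λ·Σ_{a∈A} (Σ_{C ∋ a} x_C − 1)² for binary vectors x indexed by the nonempty subsets of A. Then a binary vector x* minimizes f over all binary vectors if and only if x* satisfies the covering constraint and maximizes Σ_C v(C)·x_C among all binary vectors satisfying the covering constraint. Consequently, the minimizers of the QUBO objective f are exactly the indicator vectors of optimal coalition structures. -/

import Mathlib

/-- The nonempty coalitions over the agent set `A`. -/
def coalitions {α : Type*} [DecidableEq α] (A : Finset α) : Finset (Finset α) :=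
  A.powerset.filter (fun C => C ≠ ∅)

/-- The penalized QUBO objective of BILP-Q:
`f(x) = −Σ_C v(C)·x_C + λ·Σ_{a∈A} (Σ_{C ∋ a} x_C − 1)²`. -/
def penalizedObjective {α : Type*} [DecidableEq α] (A : Finset α)
    (v : Finset α → ℝ) (lam : ℝ) (x : Finset α → ℝ) : ℝ :=
  -(∑ C ∈ coalitions A, v C * x C) +
    lam * ∑ a ∈ A, ((∑ C ∈ (coalitions A).filter (fun C => a ∈ C), x C) - 1) ^ 2

theorem abs_value_le {α : Type*} [DecidableEq α] (A : Finset α)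
    (v x : Finset α → ℝ) (hx : ∀ C, x C = 0 ∨ x C = 1) :
    |∑ C ∈ coalitions A, v C * x C| ≤ ∑ C ∈ coalitions A, |v C| := by
  refine (Finset.abs_sum_le_sum_abs _ _).trans (Finset.sum_le_sum fun C _ => ?_)
  rcases hx C with h | h <;> simp [h]

theorem one_le_sq_of_binary {ι : Type*} (s : Finset ι) (x : ι → ℝ)
    (hx : ∀ C, x C = 0 ∨ x C = 1) (hne : ∑ C ∈ s, x C ≠ 1) :
    1 ≤ ((∑ C ∈ s, x C) - 1) ^ 2 := by
  have hz : ∀ C, ∃ k : ℤ, x C = k := fun C => by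
    rcases hx C with h | h
    · exact ⟨0, by simp [h]⟩
    · exact ⟨1, by simp [h]⟩
  choose k hk using hz
  have hs : ∑ C ∈ s, x C = ((∑ C ∈ s, k C : ℤ) : ℝ) := by
    push_cast
    exact Finset.sum_congr rfl fun C _ => hk C
  rw [hs] at hne ⊢
  have h1 : (∑ C ∈ s, k C) - 1 ≠ 0 := fun h => hne (by
    have : ∑ C ∈ s, k C = 1 := by omega
    rw [this]; simp)
  have h2 : 0 < ((∑ C ∈ s, k C) - 1) ^ 2 := by positivity
  have h3 : 1 ≤ ((∑ C ∈ s, k C) - 1) ^ 2 := h2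
  exact_mod_cast h3

theorem penalizedObjective_of_feasible {α : Type*} [DecidableEq α] (A : Finset α)
    (v : Finset α → ℝ) (lam : ℝ) (x : Finset α → ℝ)
    (h : ∀ a ∈ A, ∑ C ∈ (coalitions A).filter (fun C => a ∈ C), x C = 1) :
    penalizedObjective A v lam x = -(∑ C ∈ coalitions A, v C * x C) := by
  unfold penalizedObjective
  have h0 : ∑ a ∈ A, ((∑ C ∈ (coalitions A).filter (fun C => a ∈ C), x C) - 1) ^ 2 = 0 :=
    Finset.sum_eq_zero (fun a ha => by rw [h a ha]; norm_num)
  rw [h0, mul_zero, add_zero]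

theorem lt_penalizedObjective_of_infeasible {α : Type*} [DecidableEq α] (A : Finset α)
    (v : Finset α → ℝ) (lam : ℝ) (hlam : lam > 2 * ∑ C ∈ coalitions A, |v C|)
    (x : Finset α → ℝ) (hx : ∀ C, x C = 0 ∨ x C = 1)
    (h : ¬ ∀ a ∈ A, ∑ C ∈ (coalitions A).filter (fun C => a ∈ C), x C = 1) :
    ∑ C ∈ coalitions A, |v C| < penalizedObjective A v lam x := by
  push Not at h
  obtain ⟨a, ha, hne⟩ := h
  have h1 := one_le_sq_of_binary _ x hx hne
  have h2 : ((∑ C ∈ (coalitions A).filter (fun C => a ∈ C), x C) - 1) ^ 2 ≤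
      ∑ a ∈ A, ((∑ C ∈ (coalitions A).filter (fun C => a ∈ C), x C) - 1) ^ 2 :=
    Finset.single_le_sum
      (f := fun a => ((∑ C ∈ (coalitions A).filter (fun C => a ∈ C), x C) - 1) ^ 2)
      (fun _ _ => sq_nonneg _) ha
  have h3 := (abs_le.mp (abs_value_le A v x hx)).2
  have h4 : 0 ≤ ∑ C ∈ coalitions A, |v C| := Finset.sum_nonneg fun _ _ => abs_nonneg _
  have h5 := le_mul_of_one_le_right (by linarith : 0 ≤ lam) (h1.trans h2)
  unfold penalizedObjective
  linarith

theorem grand_feasible {α : Type*} [DecidableEq α] (A : Finset α) (hA : A.Nonempty) :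
    ∀ a ∈ A, ∑ C ∈ (coalitions A).filter (fun C => a ∈ C),
      (if C = A then (1 : ℝ) else 0) = 1 := by
  intro a ha
  rw [Finset.sum_ite_eq', if_pos]
  simp [coalitions, ha, hA.ne_empty]

/-- For `λ > 2·Σ_C |v(C)|`, a binary vector `x*` minimizes the penalized objective
over all binary vectors iff it satisfies the covering constraint and maximizes
`Σ_C v(C)·x_C` among all binary vectors satisfying the covering constraint. -/
theorem qubo_minimizers_are_optimal_structures {α : Type*} [DecidableEq α]
    (A : Finset α) (hA : A.Nonempty) (v : Finset α → ℝ) (lam : ℝ)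
    (hlam : lam > 2 * ∑ C ∈ coalitions A, |v C|)
    (xstar : Finset α → ℝ) (hxstar : ∀ C, xstar C = 0 ∨ xstar C = 1) :
    (∀ y : Finset α → ℝ, (∀ C, y C = 0 ∨ y C = 1) →
        penalizedObjective A v lam xstar ≤ penalizedObjective A v lam y) ↔
      ((∀ a ∈ A, ∑ C ∈ (coalitions A).filter (fun C => a ∈ C), xstar C = 1) ∧
       (∀ y : Finset α → ℝ, (∀ C, y C = 0 ∨ y C = 1) →
          (∀ a ∈ A, ∑ C ∈ (coalitions A).filter (fun C => a ∈ C), y C = 1) →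
          ∑ C ∈ coalitions A, v C * y C ≤ ∑ C ∈ coalitions A, v C * xstar C)) := by
  constructor
  · intro hmin
    have hfeas : ∀ a ∈ A, ∑ C ∈ (coalitions A).filter (fun C => a ∈ C), xstar C = 1 := by
      by_contra hn
      have h1 := lt_penalizedObjective_of_infeasible A v lam hlam xstar hxstar hn
      have hb : ∀ C : Finset α, (if C = A then (1 : ℝ) else 0) = 0 ∨
          (if C = A then (1 : ℝ) else 0) = 1 := fun C => by split_ifs <;> simp
      have h2 := hmin (fun C => if C = A then 1 else 0) hb
      rw [penalizedObjective_of_feasible A v lam (fun C => if C = A then 1 else 0)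
        (grand_feasible A hA)] at h2
      have h3 := (abs_le.mp (abs_value_le A v (fun C => if C = A then 1 else 0) hb)).1
      linarith
    refine ⟨hfeas, fun y hy hyf => ?_⟩
    have h := hmin y hy
    rw [penalizedObjective_of_feasible A v lam xstar hfeas,
      penalizedObjective_of_feasible A v lam y hyf] at h
    linarith
  · rintro ⟨hfeas, hmax⟩ y hy
    rw [penalizedObjective_of_feasible A v lam xstar hfeas]
    by_cases hyf : ∀ a ∈ A, ∑ C ∈ (coalitions A).filter (fun C => a ∈ C), y C = 1
    · rw [penalizedObjective_of_feasible A v lam y hyf]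
      linarith [hmax y hy hyf]
    · have h1 := lt_penalizedObjective_of_infeasible A v lam hlam y hy hyf
      have h3 := (abs_le.mp (abs_value_le A v xstar hxstar)).1
      linarith
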